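/- Let k ≥ 1 and let P, P' be database properties. Suppose that for every x = (x_1,…,x_k) ∈ X^k with pairwise distinct entries and every D ∈ DB there are sets S_1^{x,D}, …, S_k^{x,D} ⊆ Ȳ, each satisfying (⊥ ∈ S_i^{x,D} implies S_i^{x,D} = Ȳ), such that for all r, u ∈ Ȳ^k: if D[x↦r] ∈ P and D[x↦u] ∈ P', then there exists an index i with u_i ∈ S_i^{x,D} and r_i ≠ u_i. Then ⟦P → P'⟧_k ≤ max over all such x and D of e · Σ_{i=1}^{k} √(10 · |S_i^{x,D} ∩ Y| / M), where e is Euler's number. -/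

import Mathlib

noncomputable section

/- `Ȳ = Y ∪ {⊥}` is modeled by `Option Y` (`⊥ = none`), databases by `X → Option Y`,
and `ℂ[DB]` by `EuclideanSpace ℂ (X → Option Y)`. -/

/-- matrix (in the computational basis) of the single-register unitary `Comp` -/
def compMat (Y : Type*) [Fintype Y] [DecidableEq Y] :
    Matrix (Option Y) (Option Y) ℂ :=
  Matrix.of fun u v =>
    match u, v with
    | none, none => 0
    | some _, none => ((Real.sqrt (Fintype.card Y) : ℝ) : ℂ)⁻¹
    | none, some _ => ((Real.sqrt (Fintype.card Y) : ℝ) : ℂ)⁻¹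
    | some a, some b => (if a = b then (1 : ℂ) else 0) - ((Fintype.card Y : ℕ) : ℂ)⁻¹

/-- matrix of the diagonal unitary `O_ŷ` associated to a character `ŷ` of `Y` -/
def oMat {Y : Type*} [Fintype Y] [DecidableEq Y] [AddCommGroup Y] (c : AddChar Y ℂ) :
    Matrix (Option Y) (Option Y) ℂ :=
  Matrix.diagonal fun u => Option.elim u 1 fun r => c r

/-- matrix of the single-register compressed oracle `cO_ŷ = Comp ∘ O_ŷ ∘ Comp` -/
def cOMat {Y : Type*} [Fintype Y] [DecidableEq Y] [AddCommGroup Y] (c : AddChar Y ℂ) :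
    Matrix (Option Y) (Option Y) ℂ :=
  compMat Y * oMat c * compMat Y

/-- a single-register operator (given by its matrix `m`) acting at register `x0` -/
def liftMat {X Y : Type*} [Fintype X] [DecidableEq X] [DecidableEq Y] (x0 : X)
    (m : Matrix (Option Y) (Option Y) ℂ) :
    Matrix (X → Option Y) (X → Option Y) ℂ :=
  Matrix.of fun D' D => if ∀ a, a ≠ x0 → D' a = D a then m (D' x0) (D x0) else 0

/-- matrix of `cO_{x,ŷ}`: the composition of `cO_{ŷ i}` acting at register `x i` -/
def cOparMat {X Y : Type*} [Fintype X] [DecidableEq X] [Fintype Y] [DecidableEq Y]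
    [AddCommGroup Y] {k : ℕ} (x : Fin k → X) (c : Fin k → AddChar Y ℂ) :
    Matrix (X → Option Y) (X → Option Y) ℂ :=
  (List.ofFn fun i : Fin k => liftMat (x i) (cOMat (c i))).prod

/-- matrix of the orthogonal projection onto `span{e_D : D ∈ P}` -/
def projMat {ι : Type*} [DecidableEq ι] (P : Set ι) : Matrix ι ι ℂ := by
  classical exact Matrix.of fun i j => if i = j ∧ i ∈ P then 1 else 0

/-- the (continuous linear) operator on `ℓ²` given by a matrix -/
def toOp {ι : Type*} [Fintype ι] [DecidableEq ι] (m : Matrix ι ι ℂ) :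
    EuclideanSpace ℂ ι →L[ℂ] EuclideanSpace ℂ ι :=
  LinearMap.toContinuousLinearMap (Matrix.toEuclideanLin m)

/-- `D|^x`: the set of databases that coincide with `D` outside of `x` -/
def agreeOff {X Y : Type*} {k : ℕ} (D : X → Option Y) (x : Fin k → X) :
    Set (X → Option Y) :=
  {D' | ∀ a : X, (∀ i, x i ≠ a) → D' a = D a}

/-- The quantum transition capacity `⟦P → P' | X₀⟧_k`: the supremum, over all `x ∈ X₀^k`
with pairwise distinct entries, all `k`-tuples `ŷ` of characters of `Y` and all databases `D`,
of `‖P'|_{D|^x} ∘ cO_{x,ŷ} ∘ P|_{D|^x}‖` (`0` if the range is empty). -/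
def qtc {X Y : Type*} [Fintype X] [DecidableEq X] [Fintype Y] [DecidableEq Y]
    [AddCommGroup Y] (P P' : Set (X → Option Y)) (k : ℕ) (X₀ : Set X) : ℝ :=
  sSup {v : ℝ | ∃ (x : Fin k → X) (c : Fin k → AddChar Y ℂ) (D : X → Option Y),
    Function.Injective x ∧ (∀ i, x i ∈ X₀) ∧
    v = ‖(toOp (projMat (P' ∩ agreeOff D x))).comp
          ((toOp (cOparMat x c)).comp (toOp (projMat (P ∩ agreeOff D x))))‖}

end

/- `D[x↦r]`: the database redefined at the pairwise distinct points `x i` by values `r i` -/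
open Classical in
noncomputable def dbUpdate {X Y : Type*} {k : ℕ} (D : X → Option Y)
    (x : Fin k → X) (r : Fin k → Option Y) : X → Option Y :=
  fun a => if h : ∃ i, x i = a then r h.choose else D a

section TransitionBound

open scoped Matrix.Norms.L2Operator Kronecker

/-- The `ℓ²` operator norm of a matrix is bounded by its Frobenius norm. -/
theorem l2_opNorm_le_sqrt_sum_sq {n : Type*} [Fintype n] [DecidableEq n] (m : Matrix n n ℂ) :
    ‖m‖ ≤ Real.sqrt (∑ i, ∑ j, ‖m i j‖ ^ 2) := by
  rw [← Matrix.l2_opNorm_toEuclideanCLM]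
  refine ContinuousLinearMap.opNorm_le_bound _ (Real.sqrt_nonneg _) fun v => ?_
  rw [EuclideanSpace.norm_eq, EuclideanSpace.norm_eq, ← Real.sqrt_mul (by positivity)]
  refine Real.sqrt_le_sqrt ?_
  rw [Finset.sum_mul]
  refine Finset.sum_le_sum fun i _ => ?_
  rw [Matrix.ofLp_toEuclideanCLM, Matrix.mulVec, dotProduct]
  calc ‖∑ j, m i j * v j‖ ^ 2 ≤ (∑ j, ‖m i j‖ * ‖v j‖) ^ 2 := by
        gcongr
        exact (norm_sum_le _ _).trans (by simp)
    _ ≤ _ := Finset.sum_mul_sq_le_sq_mul_sq _ _ _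

theorem norm_prod_ofFn_le {R : Type*} [NormedRing R] [NormOneClass R] :
    ∀ {k : ℕ} (a : Fin k → R) (β : Fin k → ℝ), (∀ i, ‖a i‖ ≤ β i) →
      ‖(List.ofFn a).prod‖ ≤ ∏ i, β i
  | 0, _, _, _ => by simp
  | k + 1, a, β, h => by
    rw [List.ofFn_succ, List.prod_cons, Fin.prod_univ_succ]
    exact (norm_mul_le _ _).trans (mul_le_mul (h 0)
      (norm_prod_ofFn_le _ _ fun i => h i.succ) (norm_nonneg _) ((norm_nonneg _).trans (h 0)))

/-- Perturbing contractions `a i` by `b i` with `‖b i‖ ≤ β i` changes their product by at most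
`∏ (1 + β i) - 1`. -/
theorem norm_prod_ofFn_sub_prod_ofFn_le {R : Type*} [NormedRing R] [NormOneClass R] :
    ∀ {k : ℕ} (a b : Fin k → R) (β : Fin k → ℝ), (∀ i, ‖a i‖ ≤ 1) → (∀ i, ‖b i‖ ≤ β i) →
      ‖(List.ofFn a).prod - (List.ofFn fun i => a i - b i).prod‖ ≤ ∏ i, (1 + β i) - 1
  | 0, _, _, _, _, _ => by simp
  | k + 1, a, b, β, ha, hb => by
    rw [List.ofFn_succ, List.ofFn_succ, List.prod_cons, List.prod_cons, Fin.prod_univ_succ]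
    set A := (List.ofFn fun i : Fin k => a i.succ).prod
    set C := (List.ofFn fun i : Fin k => a i.succ - b i.succ).prod
    have hAC : ‖A - C‖ ≤ ∏ i : Fin k, (1 + β i.succ) - 1 :=
      norm_prod_ofFn_sub_prod_ofFn_le _ _ _ (fun i => ha i.succ) fun i => hb i.succ
    have hC : ‖C‖ ≤ ∏ i : Fin k, (1 + β i.succ) :=
      norm_prod_ofFn_le _ _ fun i =>
        (norm_sub_le _ _).trans (add_le_add (ha i.succ) (hb i.succ))
    calc ‖a 0 * A - (a 0 - b 0) * C‖ = ‖a 0 * (A - C) + b 0 * C‖ := by congr 1; noncomm_ring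
      _ ≤ ‖a 0‖ * ‖A - C‖ + ‖b 0‖ * ‖C‖ :=
        (norm_add_le _ _).trans (add_le_add (norm_mul_le _ _) (norm_mul_le _ _))
      _ ≤ 1 * (∏ i : Fin k, (1 + β i.succ) - 1) + β 0 * ∏ i : Fin k, (1 + β i.succ) := by
        have h0 := (norm_nonneg _).trans (hb 0)
        gcongr
        exacts [ha 0, hb 0]
      _ = _ := by ring

section Lift

variable {X Y : Type*} [Fintype X] [DecidableEq X] [DecidableEq Y]

theorem liftMat_eq_submatrix (x₀ : X) (m : Matrix (Option Y) (Option Y) ℂ) :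
    liftMat x₀ m = (m ⊗ₖ (1 : Matrix ({j // j ≠ x₀} → Option Y) _ ℂ)).submatrix
      (Equiv.funSplitAt x₀ (Option Y)) (Equiv.funSplitAt x₀ (Option Y)) := by
  ext D' D
  simp [liftMat, Matrix.one_apply, funext_iff]

variable [Fintype Y]

/-- `liftMat x₀` as a homomorphism of `*`-algebras. -/
noncomputable def liftMatHom (x₀ : X) : Matrix (Option Y) (Option Y) ℂ →⋆ₙₐ[ℂ]
    Matrix (X → Option Y) (X → Option Y) ℂ where
  toFun := liftMat x₀
  map_smul' c m := by simp [liftMat_eq_submatrix, Matrix.smul_kronecker, Matrix.submatrix_smul]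
  map_zero' := by ext; simp [liftMat]
  map_add' m n := by simp [liftMat_eq_submatrix, Matrix.add_kronecker, Matrix.submatrix_add]
  map_mul' m n := by
    rw [liftMat_eq_submatrix, liftMat_eq_submatrix, liftMat_eq_submatrix,
      Matrix.submatrix_mul_equiv, ← Matrix.mul_kronecker_mul, one_mul]
  map_star' m := by
    simp [liftMat_eq_submatrix, Matrix.star_eq_conjTranspose, Matrix.conjTranspose_kronecker]

theorem norm_liftMat_le (x₀ : X) (m : Matrix (Option Y) (Option Y) ℂ) :
    ‖liftMat x₀ m‖ ≤ ‖m‖ :=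
  NonUnitalStarAlgHom.norm_apply_le (liftMatHom x₀) m

theorem liftMat_sub (x₀ : X) (m n : Matrix (Option Y) (Option Y) ℂ) :
    liftMat x₀ (m - n) = liftMat x₀ m - liftMat x₀ n :=
  map_sub (liftMatHom x₀) m n

theorem entries_ne_zero_of_prod_liftMat_ne_zero :
    ∀ {k : ℕ} (x : Fin k → X) (m : Fin k → Matrix (Option Y) (Option Y) ℂ),
      Function.Injective x → ∀ D' D : X → Option Y,
      (List.ofFn fun i => liftMat (x i) (m i)).prod D' D ≠ 0 →
      (∀ a, (∀ i, x i ≠ a) → D' a = D a) ∧ ∀ i, m i (D' (x i)) (D (x i)) ≠ 0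
  | 0, _, _, _, D', D, h => by
    have : D' = D := by
      by_contra hne
      exact h (by simp [Matrix.one_apply_ne hne])
    simp [this]
  | k + 1, x, m, hx, D', D, h => by
    rw [List.ofFn_succ, List.prod_cons, Matrix.mul_apply] at h
    obtain ⟨E, -, hE⟩ := Finset.exists_ne_zero_of_sum_ne_zero h
    obtain ⟨h₀, hprod⟩ := mul_ne_zero_iff.1 hE
    obtain ⟨hoff, hne⟩ := entries_ne_zero_of_prod_liftMat_ne_zero (fun i => x i.succ)
      (fun i => m i.succ) (hx.comp (Fin.succ_injective k)) E D hprod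
    simp only [liftMat, Matrix.of_apply, ne_eq, ite_eq_right_iff, Classical.not_imp] at h₀
    obtain ⟨hD', hm⟩ := h₀
    refine ⟨fun a ha => ?_, fun i => ?_⟩
    · rw [hD' a (ha 0).symm, hoff a fun i => ha i.succ]
    · refine Fin.cases ?_ (fun i => ?_) i
      · rwa [← hoff (x 0) fun i hi => Fin.succ_ne_zero i (hx hi)]
      · rw [hD' _ fun hi => Fin.succ_ne_zero i (hx hi)]
        exact hne i

end Lift

section Oracle

theorem inv_sqrt_card_mul_self {Y : Type*} [Fintype Y] :
    ((Real.sqrt (Fintype.card Y) : ℝ) : ℂ)⁻¹ * ((Real.sqrt (Fintype.card Y) : ℝ) : ℂ)⁻¹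
      = ((Fintype.card Y : ℕ) : ℂ)⁻¹ := by
  rw [← mul_inv, ← Complex.ofReal_mul, Real.mul_self_sqrt (Nat.cast_nonneg _),
    Complex.ofReal_natCast]

variable {Y : Type*} [Fintype Y] [DecidableEq Y]

theorem compMat_mul_self [Nonempty Y] : compMat Y * compMat Y = 1 := by
  have hM : ((Fintype.card Y : ℕ) : ℂ) ≠ 0 := Nat.cast_ne_zero.2 Fintype.card_ne_zero
  ext u v
  rw [Matrix.mul_apply, Fintype.sum_option]
  cases u <;> cases v <;>
    simp [compMat, Matrix.one_apply, inv_sqrt_card_mul_self, mul_sub, sub_mul, hM]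
  rw [mul_left_comm, mul_inv_cancel₀ hM, mul_one, sub_self]

theorem star_compMat : star (compMat Y) = compMat Y := by
  ext u v
  cases u <;> cases v <;> simp [compMat, Matrix.star_apply, eq_comm, apply_ite]

theorem norm_compMat [Nonempty Y] : ‖compMat Y‖ = 1 := by
  have h := CStarRing.norm_star_mul_self (x := compMat Y)
  rw [star_compMat, compMat_mul_self, norm_one] at h
  nlinarith [norm_nonneg (compMat Y)]

variable [AddCommGroup Y]

theorem norm_oMat_le (c : AddChar Y ℂ) : ‖oMat c‖ ≤ 1 := by
  rw [oMat, Matrix.l2_opNorm_diagonal]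
  refine (pi_norm_le_iff_of_nonneg zero_le_one).2 fun u => ?_
  cases u <;> simp

theorem norm_cOMat_le (c : AddChar Y ℂ) : ‖cOMat c‖ ≤ 1 := by
  calc ‖cOMat c‖ ≤ ‖compMat Y‖ * ‖oMat c‖ * ‖compMat Y‖ :=
        (norm_mul_le _ _).trans (by gcongr; exact norm_mul_le _ _)
    _ ≤ 1 := by simpa [norm_compMat] using norm_oMat_le c

theorem cOMat_zero : cOMat (0 : AddChar Y ℂ) = 1 := by
  have : oMat (0 : AddChar Y ℂ) = 1 := by
    rw [oMat, ← Matrix.diagonal_one]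
    congr 1
    ext u
    cases u <;> simp
  rw [cOMat, this, mul_one, compMat_mul_self]

theorem cOMat_some_none {c : AddChar Y ℂ} (hc : c ≠ 0) (y : Y) :
    cOMat c (some y) none = c y * ((Real.sqrt (Fintype.card Y) : ℝ) : ℂ)⁻¹ := by
  have hs : ∑ y, c y = 0 := AddChar.sum_eq_zero_iff_ne_zero.2 hc
  simp [cOMat, oMat, Matrix.mul_apply, Matrix.diagonal_apply, Fintype.sum_option, compMat, sub_mul,
    ← Finset.sum_mul, ← Finset.mul_sum, hs]

theorem cOMat_some_some {c : AddChar Y ℂ} (hc : c ≠ 0) {y z : Y} (hyz : y ≠ z) :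
    cOMat c (some y) (some z) = (1 - c y - c z) * ((Fintype.card Y : ℕ) : ℂ)⁻¹ := by
  have hs : ∑ y, c y = 0 := AddChar.sum_eq_zero_iff_ne_zero.2 hc
  simp [cOMat, oMat, Matrix.mul_apply, Matrix.diagonal_apply, Fintype.sum_option, compMat, sub_mul,
    mul_sub, ← Finset.sum_mul, ← Finset.mul_sum, hs, inv_sqrt_card_mul_self, hyz]
  ring

/-- The part of a matrix consisting of its off-diagonal entries in the rows indexed by `S`. -/
noncomputable def offDiagRows {ι : Type*} (S : Set ι) (m : Matrix ι ι ℂ) : Matrix ι ι ℂ := by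
  classical exact Matrix.of fun u r => if u ∈ S ∧ r ≠ u then m u r else 0

theorem sum_sq_offDiagRows_le (c : AddChar Y ℂ) (S : Set (Option Y)) (y : Y) :
    ∑ r, ‖offDiagRows S (cOMat c) (some y) r‖ ^ 2 ≤ 10 / Fintype.card Y := by
  have hM : (0 : ℝ) < Fintype.card Y := Nat.cast_pos.2 Fintype.card_pos
  by_cases hc : c = 0
  · subst hc
    rw [Finset.sum_eq_zero]
    · positivity
    · intro r _
      by_cases hr : r = some y
      · simp [offDiagRows, hr]
      · simp [offDiagRows, cOMat_zero, Matrix.one_apply_ne (Ne.symm hr)]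
  · have hoff : ∀ r, ‖offDiagRows S (cOMat c) (some y) r‖ ≤
        if r ≠ some y then ‖cOMat c (some y) r‖ else 0 := by
      intro r
      simp only [offDiagRows, Matrix.of_apply]
      split_ifs <;> simp_all
    have hnone : ‖offDiagRows S (cOMat c) (some y) none‖ ^ 2 ≤ 1 / Fintype.card Y := by
      refine (pow_le_pow_left₀ (norm_nonneg _) (hoff none) 2).trans ?_
      simp [cOMat_some_none hc, Real.sq_sqrt hM.le]
    have hsome : ∀ z, ‖offDiagRows S (cOMat c) (some y) (some z)‖ ^ 2 ≤
        (3 / Fintype.card Y : ℝ) ^ 2 := by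
      intro z
      refine pow_le_pow_left₀ (norm_nonneg _) ((hoff _).trans ?_) 2
      split_ifs with hz
      · rw [cOMat_some_some hc (by simpa [eq_comm] using hz), norm_mul, norm_inv,
          Complex.norm_natCast, ← div_eq_mul_inv]
        gcongr
        calc ‖1 - c y - c z‖ ≤ ‖(1 : ℂ)‖ + ‖c y‖ + ‖c z‖ :=
              (norm_sub_le _ _).trans (by gcongr; exact norm_sub_le _ _)
          _ = 3 := by simp; norm_num
      · positivity
    rw [Fintype.sum_option]
    calc _ ≤ (1 / Fintype.card Y : ℝ) + ∑ _z : Y, (3 / Fintype.card Y : ℝ) ^ 2 :=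
          add_le_add hnone (Finset.sum_le_sum fun z _ => hsome z)
      _ = 10 / Fintype.card Y := by
          simp only [Finset.sum_const, Finset.card_univ, nsmul_eq_mul]
          field_simp
          norm_num

theorem norm_offDiagRows_cOMat_le (c : AddChar Y ℂ) {S : Set (Option Y)} (hS : none ∉ S) :
    ‖offDiagRows S (cOMat c)‖ ≤
      Real.sqrt (10 * ({y : Y | some y ∈ S}.ncard : ℝ) / Fintype.card Y) := by
  classical
  refine (l2_opNorm_le_sqrt_sum_sq _).trans (Real.sqrt_le_sqrt ?_)
  rw [Fintype.sum_option]
  have hnone : ∑ r, ‖offDiagRows S (cOMat c) none r‖ ^ 2 = 0 := by simp [offDiagRows, hS]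
  have hsome : ∀ y, ∑ r, ‖offDiagRows S (cOMat c) (some y) r‖ ^ 2 ≤
      if some y ∈ S then (10 / Fintype.card Y : ℝ) else 0 := by
    intro y
    split_ifs with hy
    · exact sum_sq_offDiagRows_le c S y
    · simp [offDiagRows, hy]
  rw [hnone, zero_add]
  refine (Finset.sum_le_sum fun y _ => hsome y).trans (le_of_eq ?_)
  rw [← Finset.sum_filter, Finset.sum_const, nsmul_eq_mul, Set.ncard_eq_toFinset_card']
  simp only [Set.toFinset_ofPred]
  ring

end Oracle

theorem norm_projMat_le {ι : Type*} [Fintype ι] [DecidableEq ι] (P : Set ι) :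
    ‖projMat P‖ ≤ 1 := by
  classical
  have : projMat P = Matrix.diagonal fun i => if i ∈ P then (1 : ℂ) else 0 := by
    ext i j
    simp only [projMat, Matrix.of_apply, Matrix.diagonal_apply]
    split_ifs <;> simp_all
  rw [this, Matrix.l2_opNorm_diagonal]
  refine (pi_norm_le_iff_of_nonneg zero_le_one).2 fun i => ?_
  split_ifs <;> simp

theorem projMat_mul_mul_projMat_apply {ι : Type*} [Fintype ι] [DecidableEq ι] (P Q : Set ι)
    (m : Matrix ι ι ℂ) (i j : ι) (h : (projMat Q * (m * projMat P)) i j ≠ 0) :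
    i ∈ Q ∧ j ∈ P ∧ m i j ≠ 0 := by
  simp only [Matrix.mul_apply, projMat, Matrix.of_apply] at h
  simp_all [ite_and]

theorem norm_toOp_comp_comp {ι : Type*} [Fintype ι] [DecidableEq ι] (a b c : Matrix ι ι ℂ) :
    ‖(toOp a).comp ((toOp b).comp (toOp c))‖ = ‖a * (b * c)‖ := by
  rw [← Matrix.l2_opNorm_toEuclideanCLM, map_mul, map_mul]
  rfl

theorem norm_mul_mul_le_of_norm_le_one {R : Type*} [NormedRing R] {a c : R} (b : R)
    (ha : ‖a‖ ≤ 1) (hc : ‖c‖ ≤ 1) : ‖a * (b * c)‖ ≤ ‖b‖ :=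
  calc ‖a * (b * c)‖ ≤ ‖a‖ * (‖b‖ * ‖c‖) :=
        (norm_mul_le _ _).trans (by gcongr; exact norm_mul_le _ _)
    _ ≤ 1 * (‖b‖ * 1) := by gcongr
    _ = ‖b‖ := by ring

theorem prod_one_add_sub_one_le {k : ℕ} (β : Fin k → ℝ) (hβ : ∀ i, 0 ≤ β i)
    (hs : ∑ i, β i ≤ 1) : ∏ i, (1 + β i) - 1 ≤ Real.exp 1 * ∑ i, β i := by
  set s := ∑ i, β i
  have hs0 : 0 ≤ s := Finset.sum_nonneg fun i _ => hβ i
  have h1 : ∏ i, (1 + β i) ≤ Real.exp s := Real.prod_one_add_le_exp_sum _ hβ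
  have h2 : Real.exp s * (1 - s) ≤ 1 := by
    calc Real.exp s * (1 - s) ≤ Real.exp s * Real.exp (-s) := by
          gcongr
          exact Real.one_sub_le_exp_neg s
      _ = 1 := by rw [← Real.exp_add]; simp
  have h3 : Real.exp s * s ≤ Real.exp 1 * s := by gcongr
  linarith

theorem dbUpdate_comp_eq_of_mem_agreeOff {X Y : Type*} {k : ℕ} {D D' : X → Option Y}
    {x : Fin k → X} (h : D' ∈ agreeOff D x) : dbUpdate D x (D' ∘ x) = D' := by
  funext a
  by_cases ha : ∃ i, x i = a
  · simp only [dbUpdate, ha, dite_true, Function.comp_apply]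
    rw [ha.choose_spec]
  · simp only [dbUpdate, ha, dite_false]
    exact (h a (not_exists.1 ha)).symm

theorem norm_transition_le {X Y : Type*} [Fintype X] [DecidableEq X]
    [Fintype Y] [DecidableEq Y] [AddCommGroup Y] {k : ℕ} (P P' : Set (X → Option Y))
    (x : Fin k → X) (hx : Function.Injective x) (D : X → Option Y) (S : Fin k → Set (Option Y))
    (hbot : ∀ i, none ∈ S i → S i = Set.univ)
    (hrec : ∀ r u : Fin k → Option Y, dbUpdate D x r ∈ P → dbUpdate D x u ∈ P' →
      ∃ i, u i ∈ S i ∧ r i ≠ u i)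
    (c : Fin k → AddChar Y ℂ) :
    ‖projMat (P' ∩ agreeOff D x) * (cOparMat x c * projMat (P ∩ agreeOff D x))‖ ≤
      Real.exp 1 * ∑ i : Fin k,
        Real.sqrt (10 * ({y : Y | some y ∈ S i}.ncard : ℝ) / Fintype.card Y) := by
  set β : Fin k → ℝ := fun i =>
    Real.sqrt (10 * ({y : Y | some y ∈ S i}.ncard : ℝ) / Fintype.card Y)
  have hβ : ∀ i, 0 ≤ β i := fun i => Real.sqrt_nonneg _
  have hA : ∀ i, ‖liftMat (x i) (cOMat (c i))‖ ≤ 1 := fun i =>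
    (norm_liftMat_le _ _).trans (norm_cOMat_le _)
  by_cases hs : 1 < ∑ i, β i
  · refine (norm_mul_mul_le_of_norm_le_one _ (norm_projMat_le _) (norm_projMat_le _)).trans ?_
    have h1 : ‖cOparMat x c‖ ≤ 1 := (norm_prod_ofFn_le _ (fun _ => 1) hA).trans (by simp)
    have h2 : (1 : ℝ) ≤ Real.exp 1 := Real.one_le_exp zero_le_one
    nlinarith
  · rw [not_lt] at hs
    have hS : ∀ i, none ∉ S i := by
      intro i hi
      have hM : (Fintype.card Y : ℝ) ≠ 0 := Nat.cast_ne_zero.2 Fintype.card_ne_zero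
      have hβi : β i = Real.sqrt 10 := by
        simp [β, hbot i hi, Set.ncard_univ, Nat.card_eq_fintype_card, hM]
      have hle : Real.sqrt 10 ≤ 1 :=
        hβi ▸ (Finset.single_le_sum (fun j _ => hβ j) (Finset.mem_univ i)).trans hs
      rw [Real.sqrt_le_one] at hle
      norm_num at hle
    set C := (List.ofFn fun i =>
      liftMat (x i) (cOMat (c i)) - liftMat (x i) (offDiagRows (S i) (cOMat (c i)))).prod with hC
    have hzero :
        projMat (P' ∩ agreeOff D x) * (C * projMat (P ∩ agreeOff D x)) = 0 := by
      ext u r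
      by_contra hne
      obtain ⟨hu, hr, hCur⟩ := projMat_mul_mul_projMat_apply _ _ _ _ _ hne
      simp only [hC, ← liftMat_sub] at hCur
      have hent := (entries_ne_zero_of_prod_liftMat_ne_zero x _ hx u r hCur).2
      obtain ⟨i, hiS, hine⟩ := hrec (r ∘ x) (u ∘ x)
        (by rw [dbUpdate_comp_eq_of_mem_agreeOff hr.2]; exact hr.1)
        (by rw [dbUpdate_comp_eq_of_mem_agreeOff hu.2]; exact hu.1)
      refine hent i ?_
      simp only [Function.comp_apply] at hiS hine
      simp [offDiagRows, hiS, hine]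
    have hsub : projMat (P' ∩ agreeOff D x) * (cOparMat x c * projMat (P ∩ agreeOff D x)) =
        projMat (P' ∩ agreeOff D x) * ((cOparMat x c - C) * projMat (P ∩ agreeOff D x)) := by
      rw [sub_mul, mul_sub, hzero, sub_zero]
    rw [hsub]
    refine (norm_mul_mul_le_of_norm_le_one _ (norm_projMat_le _) (norm_projMat_le _)).trans ?_
    exact (norm_prod_ofFn_sub_prod_ofFn_le _ _ β hA fun i =>
      (norm_liftMat_le _ _).trans (norm_offDiagRows_cOMat_le _ (hS i))).trans
        (prod_one_add_sub_one_le β hβ hs)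

end TransitionBound

theorem stmt_9 {X Y : Type*} [Fintype X] [DecidableEq X] [Nonempty X]
    [Fintype Y] [DecidableEq Y] [AddCommGroup Y]
    (k : ℕ) (hk : 1 ≤ k) (P P' : Set (X → Option Y))
    -- the 1-local properties `L_i^{x,D}`, given as subsets `S x D i ⊆ Ȳ`
    (S : (Fin k → X) → (X → Option Y) → Fin k → Set (Option Y))
    -- if `⊥ ∈ S_i^{x,D}` then `S_i^{x,D} = Ȳ`
    (hbot : ∀ (x : Fin k → X) (D : X → Option Y) (i : Fin k), Function.Injective x →
      none ∈ S x D i → S x D i = Set.univ)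
    -- weak recognition
    (hrec : ∀ (x : Fin k → X) (D : X → Option Y) (r u : Fin k → Option Y),
      Function.Injective x → dbUpdate D x r ∈ P → dbUpdate D x u ∈ P' →
        ∃ i, u i ∈ S x D i ∧ r i ≠ u i) :
    qtc P P' k Set.univ ≤
      sSup {v : ℝ | ∃ (x : Fin k → X) (D : X → Option Y), Function.Injective x ∧
        v = Real.exp 1 * ∑ i : Fin k,
          Real.sqrt (10 * ({y : Y | some y ∈ S x D i}.ncard : ℝ) / Fintype.card Y)} := by
  refine Real.sSup_le ?_ (Real.sSup_nonneg ?_)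
  · rintro v ⟨x, c, D, hx, -, rfl⟩
    rw [norm_toOp_comp_comp]
    refine (norm_transition_le P P' x hx D (S x D) (fun i => hbot x D i hx)
      (fun r u => hrec x D r u hx) c).trans (le_csSup ?_ ⟨x, D, hx, rfl⟩)
    refine ((Set.finite_range fun p : (Fin k → X) × (X → Option Y) =>
      Real.exp 1 * ∑ i : Fin k, Real.sqrt
        (10 * ({y : Y | some y ∈ S p.1 p.2 i}.ncard : ℝ) / Fintype.card Y)).subset ?_).bddAbove
    rintro _ ⟨x, D, -, rfl⟩
    exact ⟨(x, D), rfl⟩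
  · rintro v ⟨x, D, -, rfl⟩
    positivity
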